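/- arXiv:2310.09775 — 3 statements merged into one kernel-verified Lean document; each statement's English description precedes it below -/
import Mathlib

section
/- Let a, b be natural numbers with a ≥ 1 and b ≥ 1. Then ∫_ℝ 1/((x−i)^a·(x+i)^b) dx = 2πi·(−1)^{a−1}·(2i)^{1−a−b}·C(a+b−2, a−1), where (2i)^{1−a−b} denotes the integer power of 2i with exponent 1−a−b. -/
open MeasureTheory Complex

lemma aux_ne (c : ℂ) (hc : c = I ∨ c = -I) (x : ℝ) : (x : ℂ) - c ≠ 0 := by
  intro h
  have := congrArg Complex.im h
  rcases hc with rfl | rfl <;> simp at this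

lemma aux_norm (c : ℂ) (hc : c = I ∨ c = -I) (x : ℝ) :
    ‖((x : ℂ) - c)⁻¹‖ ^ 2 = (1 + x ^ 2)⁻¹ := by
  rw [norm_inv, inv_pow, ← Complex.normSq_eq_norm_sq, Complex.normSq_apply]
  congr 1
  rcases hc with rfl | rfl <;> simp <;> ring

lemma aux_le (c : ℂ) (hc : c = I ∨ c = -I) (x : ℝ) : ‖((x : ℂ) - c)⁻¹‖ ≤ 1 := by
  have h := aux_norm c hc x
  have h2 : (1 + x ^ 2)⁻¹ ≤ 1 := inv_le_one_of_one_le₀ (by nlinarith [sq_nonneg x])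
  nlinarith [norm_nonneg (((x : ℂ) - c)⁻¹)]

lemma aux_cont (c : ℂ) (hc : c = I ∨ c = -I) : Continuous fun x : ℝ => ((x : ℂ) - c)⁻¹ :=
  Continuous.inv₀ (by fun_prop) (aux_ne c hc)

lemma aux_eqn (x : ℝ) : ‖((x : ℂ) - I)⁻¹‖ = ‖((x : ℂ) - -I)⁻¹‖ := by
  have h := (aux_norm I (Or.inl rfl) x).trans (aux_norm (-I) (Or.inr rfl) x).symm
  exact (pow_left_inj₀ (norm_nonneg _) (norm_nonneg _) two_ne_zero).1 h

lemma aux_int (p q : ℕ) (h : 2 ≤ p + q) :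
    Integrable fun x : ℝ => (((x : ℂ) - I)⁻¹) ^ p * (((x : ℂ) - -I)⁻¹) ^ q := by
  refine integrable_inv_one_add_sq.mono' ?_ (Filter.Eventually.of_forall fun x => ?_)
  · exact (((aux_cont I (Or.inl rfl)).pow p).mul
      ((aux_cont (-I) (Or.inr rfl)).pow q)).aestronglyMeasurable
  · rw [norm_mul, norm_pow, norm_pow, aux_eqn, ← pow_add, ← aux_norm (-I) (Or.inr rfl) x]
    exact pow_le_pow_of_le_one (norm_nonneg _) (aux_le _ (Or.inr rfl) x) h

lemma aux_tend (c : ℂ) (l : Filter ℝ) (hl : Filter.Tendsto (fun x : ℝ => (x : ℂ)) l (Bornology.cobounded ℂ))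
    (k : ℕ) : Filter.Tendsto (fun x : ℝ => -(((x : ℂ) - c)⁻¹) ^ (k + 1) / ((k : ℂ) + 1)) l (nhds 0) := by
  have h1 : Filter.Tendsto (fun x : ℝ => (x : ℂ) - c) l (Bornology.cobounded ℂ) := by
    rw [← tendsto_norm_atTop_iff_cobounded] at hl ⊢
    refine Filter.tendsto_atTop_mono (fun x => norm_sub_norm_le (x : ℂ) c) ?_
    simpa [sub_eq_add_neg] using Filter.tendsto_atTop_add_const_right l (-‖c‖) hl
  have h2 := Filter.tendsto_inv₀_cobounded.comp h1
  simpa using ((h2.pow (k + 1)).neg).div_const ((k : ℂ) + 1)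

lemma aux_zero (c : ℂ) (hc : c = I ∨ c = -I) (k : ℕ) :
    ∫ x : ℝ, (((x : ℂ) - c)⁻¹) ^ (k + 2) = 0 := by
  have hint : Integrable fun x : ℝ => (((x : ℂ) - c)⁻¹) ^ (k + 2) := by
    rcases hc with rfl | rfl
    · simpa using aux_int (k + 2) 0 (by omega)
    · simpa using aux_int 0 (k + 2) (by omega)
  have hd : ∀ x : ℝ, HasDerivAt (fun x : ℝ => -(((x : ℂ) - c)⁻¹) ^ (k + 1) / ((k : ℂ) + 1))
      ((((x : ℂ) - c)⁻¹) ^ (k + 2)) x := by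
    intro x
    have hne := aux_ne c hc x
    have hk : (k : ℂ) + 1 ≠ 0 := by exact_mod_cast Nat.succ_ne_zero k
    have h := (((((hasDerivAt_id (x : ℂ)).sub_const c).inv hne).pow (k + 1)).neg.div_const
      ((k : ℂ) + 1)).comp_ofReal
    refine h.congr_deriv ?_
    simp
    field_simp
    ring
  have hn : ∀ l : Filter ℝ, Filter.Tendsto (fun x : ℝ => ‖x‖) l Filter.atTop →
      Filter.Tendsto (fun x : ℝ => (x : ℂ)) l (Bornology.cobounded ℂ) := by
    intro l hl
    rw [← tendsto_norm_atTop_iff_cobounded]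
    simpa using hl
  simpa using integral_of_hasDerivAt_of_tendsto hd hint
    (aux_tend c _ (hn _ Filter.tendsto_abs_atBot_atTop) k)
    (aux_tend c _ (hn _ Filter.tendsto_abs_atTop_atTop) k)

noncomputable def auxJ (p q : ℕ) : ℂ :=
  ∫ x : ℝ, (((x : ℂ) - I)⁻¹) ^ p * (((x : ℂ) - -I)⁻¹) ^ q

lemma auxJ_rec (p q : ℕ) (h : 1 ≤ p + q) :
    auxJ (p + 1) (q + 1) = (auxJ (p + 1) q - auxJ p (q + 1)) / (2 * I) := by
  unfold auxJ
  rw [← integral_sub (aux_int _ _ (by omega)) (aux_int _ _ (by omega)), ← integral_div]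
  congr 1
  ext x
  have h1 := aux_ne I (Or.inl rfl) x
  have h2 := aux_ne (-I) (Or.inr rfl) x
  have key : ((x : ℂ) - I)⁻¹ * ((x : ℂ) - -I)⁻¹
      = (((x : ℂ) - I)⁻¹ - ((x : ℂ) - -I)⁻¹) / (2 * I) := by
    have := I_ne_zero
    field_simp
    ring
  rw [pow_succ, pow_succ]
  linear_combination (((x : ℂ) - I)⁻¹ ^ p * ((x : ℂ) - -I)⁻¹ ^ q) * key

lemma auxJ_base : auxJ 1 1 = Real.pi := by
  unfold auxJ
  rw [← integral_univ_inv_one_add_sq, ← integral_complex_ofReal]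
  congr 1
  ext x
  rw [pow_one, pow_one, ← mul_inv]
  push_cast
  congr 1
  linear_combination -I_sq

lemma auxJ_l (k : ℕ) : auxJ (k + 2) 0 = 0 := by
  simpa [auxJ] using aux_zero I (Or.inl rfl) k

lemma auxJ_r (k : ℕ) : auxJ 0 (k + 2) = 0 := by
  simpa [auxJ] using aux_zero (-I) (Or.inr rfl) k

lemma auxJ_eq (m n : ℕ) : auxJ (m + 1) (n + 1) =
    Real.pi * (-1) ^ m * ((2 * I)⁻¹) ^ (m + n) * ((m + n).choose m : ℂ) := by
  induction m generalizing n with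
  | zero =>
    induction n with
    | zero => simp [auxJ_base]
    | succ n ih =>
      rw [auxJ_rec _ _ (by omega), auxJ_r, ih]
      simp only [Nat.zero_add, Nat.choose_zero_right, pow_succ]
      ring
  | succ m ihm =>
    induction n with
    | zero =>
      rw [auxJ_rec _ _ (by omega), auxJ_l, ihm]
      simp only [Nat.add_zero, Nat.choose_self, pow_succ]
      ring
    | succ n ih =>
      rw [auxJ_rec _ _ (by omega), ih, ihm]
      have e : m + 1 + (n + 1) = (m + n + 1) + 1 := by ring
      have e1 : m + 1 + n = m + n + 1 := by ring
      have e2 : m + (n + 1) = m + n + 1 := by ring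
      rw [e, e1, e2, Nat.choose_succ_succ (m + n + 1) m, Nat.succ_eq_add_one]
      push_cast
      rw [pow_succ _ (m + n + 1), pow_succ _ m]
      ring

theorem stmt2 (a b : ℕ) (ha : 1 ≤ a) (hb : 1 ≤ b) :
    ∫ x : ℝ, 1 / (((x : ℂ) - I) ^ a * ((x : ℂ) + I) ^ b) =
      2 * (Real.pi : ℂ) * I * (-1) ^ (a - 1) * (2 * I) ^ ((1 : ℤ) - (a : ℤ) - (b : ℤ)) *
        ((a + b - 2).choose (a - 1) : ℂ) := by
  obtain ⟨m, rfl⟩ := Nat.exists_eq_add_of_le' ha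
  obtain ⟨n, rfl⟩ := Nat.exists_eq_add_of_le' hb
  have h := auxJ_eq m n
  have e : (1 : ℤ) - ((m + 1 : ℕ) : ℤ) - ((n + 1 : ℕ) : ℤ) = -((m + n + 1 : ℕ) : ℤ) := by
    push_cast; ring
  have e2 : m + 1 + (n + 1) - 2 = m + n := by omega
  rw [e, e2, zpow_neg, zpow_natCast, ← inv_pow, pow_succ, Nat.add_sub_cancel]
  have hI : (2 * I) * (2 * I)⁻¹ = 1 := mul_inv_cancel₀ (by simp)
  have h0 : ∫ x : ℝ, 1 / (((x : ℂ) - I) ^ (m + 1) * ((x : ℂ) + I) ^ (n + 1))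
      = auxJ (m + 1) (n + 1) := by
    unfold auxJ
    congr 1
    ext x
    rw [sub_neg_eq_add, inv_pow, inv_pow, ← mul_inv, one_div]
  rw [h0, h]
  linear_combination (-(Real.pi * (-1) ^ m * ((2 * I)⁻¹) ^ (m + n) * ((m + n).choose m : ℂ))) * hI
end

section
/- Let m be a natural number with m ≥ 1. Then ∫_ℝ ((4m−2)·x² − 2)/((x−i)^{m+2}·(x+i)^{m+1}) dx = (2πi/(m+1)!) · g^{(m+1)}(i), where g : ℂ → ℂ is g(z) = ((4m−2)·z² − 2)/(z+i)^{m+1}. -/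
open MeasureTheory Complex

noncomputable def FF (a b : ℕ) (x : ℝ) : ℂ := (((x : ℂ) - I) ^ a)⁻¹ * (((x : ℂ) + I) ^ b)⁻¹

noncomputable def GG (b : ℕ) (z : ℂ) : ℂ := ((z + I) ^ b)⁻¹

lemma sub_ne (x : ℝ) : (x : ℂ) - I ≠ 0 := by
  intro h
  have := congrArg Complex.im h
  simp at this

lemma add_ne (x : ℝ) : (x : ℂ) + I ≠ 0 := by
  intro h
  have := congrArg Complex.im h
  simp at this

lemma norm_sub_I (x : ℝ) : ‖(x : ℂ) - I‖ = √(1 + x ^ 2) := by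
  rw [Complex.norm_def, Complex.normSq_apply]
  congr 1
  simp
  ring

lemma norm_add_I (x : ℝ) : ‖(x : ℂ) + I‖ = √(1 + x ^ 2) := by
  rw [Complex.norm_def, Complex.normSq_apply]
  congr 1
  simp
  ring

lemma norm_FF (a b : ℕ) (x : ℝ) : ‖FF a b x‖ = (√(1 + x ^ 2) ^ (a + b))⁻¹ := by
  simp only [FF, norm_mul, norm_inv, norm_pow, norm_sub_I, norm_add_I]
  rw [pow_add, mul_inv]

lemma cont_FF (a b : ℕ) : Continuous (FF a b) := by
  unfold FF
  refine Continuous.mul (Continuous.inv₀ (by fun_prop) ?_) (Continuous.inv₀ (by fun_prop) ?_)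
  · intro x; exact pow_ne_zero _ (sub_ne x)
  · intro x; exact pow_ne_zero _ (add_ne x)

lemma integrable_FF (a b : ℕ) (h : 2 ≤ a + b) : Integrable (FF a b) := by
  refine integrable_inv_one_add_sq.mono' (cont_FF a b).aestronglyMeasurable ?_
  refine Filter.Eventually.of_forall fun x => ?_
  rw [norm_FF]
  have h1 : 1 ≤ √(1 + x ^ 2) := by
    rw [Real.one_le_sqrt]; nlinarith [sq_nonneg x]
  have h2 : √(1 + x ^ 2) ^ 2 = 1 + x ^ 2 := Real.sq_sqrt (by positivity)
  have h3 := pow_le_pow_right₀ h1 h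
  rw [h2] at h3
  exact inv_anti₀ (by positivity) h3

lemma hasDeriv_FF (a b : ℕ) (x : ℝ) :
    HasDerivAt (FF a b) (-(a : ℂ) * FF (a + 1) b x + -(b : ℂ) * FF a (b + 1) x) x := by
  have h0 : HasDerivAt (fun x : ℝ => (x : ℂ)) 1 x := Complex.ofRealCLM.hasDerivAt
  have h1 := ((h0.sub_const I).pow a).inv (pow_ne_zero _ (sub_ne x))
  have h2 := ((h0.add_const I).pow b).inv (pow_ne_zero _ (add_ne x))
  have h3 := h1.mul h2
  refine h3.congr_deriv ?_
  have e1 := sub_ne x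
  have e2 := add_ne x
  simp only [FF, Pi.pow_apply, Pi.inv_apply]
  rcases a with _ | a <;> rcases b with _ | b <;> simp <;> field_simp <;> ring

lemma tendsto_FF (a b : ℕ) (h : 1 ≤ a + b) (l : Filter ℝ)
    (hl : Filter.Tendsto (fun x : ℝ => |x|) l Filter.atTop) :
    Filter.Tendsto (FF a b) l (nhds 0) := by
  refine squeeze_zero_norm' (a := fun x => |x|⁻¹) ?_ (tendsto_inv_atTop_zero.comp hl)
  filter_upwards [hl.eventually_gt_atTop 0] with x hx
  rw [norm_FF]
  have h1 : 1 ≤ √(1 + x ^ 2) := by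
    rw [Real.one_le_sqrt]; nlinarith [sq_nonneg x]
  have h2 : |x| ≤ √(1 + x ^ 2) := Real.abs_le_sqrt (by linarith)
  have h3 := pow_le_pow_right₀ h1 h
  rw [pow_one] at h3
  exact inv_anti₀ hx (h2.trans h3)

lemma parts (a b : ℕ) (h : 1 ≤ a + b) :
    -(a : ℂ) * (∫ x, FF (a + 1) b x) + -(b : ℂ) * (∫ x, FF a (b + 1) x) = 0 := by
  have i1 := (integrable_FF (a + 1) b (by omega)).const_mul (-(a : ℂ))
  have i2 := (integrable_FF a (b + 1) (by omega)).const_mul (-(b : ℂ))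
  have := integral_of_hasDerivAt_of_tendsto (hasDeriv_FF a b) (i1.add i2)
    (tendsto_FF a b h _ Filter.tendsto_abs_atBot_atTop)
    (tendsto_FF a b h _ Filter.tendsto_abs_atTop_atTop)
  rw [integral_add i1 i2, integral_const_mul, integral_const_mul] at this
  simpa using this

lemma base (b : ℕ) : ∫ x, FF 1 (b + 1) x = 2 * Real.pi * I * ((2 * I) ^ (b + 1))⁻¹ := by
  induction b with
  | zero =>
    have : ∀ x : ℝ, FF 1 1 x = (((1 + x ^ 2)⁻¹ : ℝ) : ℂ) := by
      intro x
      simp only [FF, pow_one]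
      rw [← mul_inv]
      push_cast
      congr 1
      linear_combination -I_sq
    simp only [zero_add, this]
    rw [integral_complex_ofReal, integral_univ_inv_one_add_sq]
    have := I_ne_zero
    field_simp
  | succ b ih =>
    have h0 := parts 0 (b + 1) (by omega)
    have hb : (-((b + 1 : ℕ) : ℂ)) ≠ 0 := neg_ne_zero.2 (Nat.cast_ne_zero.2 (by omega))
    have h1 : ∫ x, FF 0 (b + 1 + 1) x = 0 := by
      simpa [-Nat.cast_add, hb, Nat.cast_add_one_ne_zero] using h0
    have h2 : ∀ x, FF 1 (b + 1 + 1) x = (2 * I)⁻¹ * (FF 1 (b + 1) x - FF 0 (b + 1 + 1) x) := by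
      intro x
      have e1 := sub_ne x
      have e2 := add_ne x
      have := I_ne_zero
      simp only [FF]
      field_simp
      ring
    simp only [h2]
    rw [integral_const_mul, integral_sub (integrable_FF _ _ (by omega)) (integrable_FF _ _ (by omega)),
      h1, ih, pow_succ (2 * I) (b + 1), mul_inv]
    ring

lemma deriv_GG (b : ℕ) : deriv (GG b) = fun z => -(b : ℂ) * GG (b + 1) z := by
  funext z
  have h : GG b = fun z => (fun w : ℂ => w ^ (-(b : ℤ))) (z + I) := by
    funext z; simp [GG]
  rw [h, deriv_comp_add_const (fun w : ℂ => w ^ (-(b : ℤ))) I z, deriv_zpow]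
  have : (-(b : ℤ) - 1) = -((b + 1 : ℕ) : ℤ) := by push_cast; ring
  rw [this, zpow_neg, zpow_natCast]
  simp [GG]

lemma main (n : ℕ) : ∀ b : ℕ, 1 ≤ n + b → ∫ x, FF (n + 1) b x =
    2 * Real.pi * I / (Nat.factorial n : ℂ) * iteratedDeriv n (GG b) I := by
  induction n with
  | zero =>
    intro b hb
    obtain ⟨b, rfl⟩ : ∃ c, b = c + 1 := ⟨b - 1, by omega⟩
    rw [zero_add, base]
    simp [GG, two_mul]
  | succ n ih =>
    intro b hb
    have h := parts (n + 1) b (by omega)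
    rw [ih (b + 1) (by omega)] at h
    rw [iteratedDeriv_succ', deriv_GG, iteratedDeriv_const_mul_field, Nat.factorial_succ]
    have h1 : ((n : ℂ) + 1) ≠ 0 := Nat.cast_add_one_ne_zero n
    have h2 : (Nat.factorial n : ℂ) ≠ 0 := Nat.cast_ne_zero.2 (Nat.factorial_ne_zero n)
    push_cast at h ⊢
    field_simp at h ⊢
    linear_combination -h

lemma contDiff_GG (n b : ℕ) : ContDiffAt ℂ n (GG b) I := by
  unfold GG
  refine ContDiffAt.inv (by fun_prop) (pow_ne_zero _ ?_)
  rw [← two_mul]; simp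

theorem stmt4 (m : ℕ) (hm : 1 ≤ m) :
    ∫ x : ℝ, ((4 * (m : ℂ) - 2) * (x : ℂ) ^ 2 - 2) /
        (((x : ℂ) - I) ^ (m + 2) * ((x : ℂ) + I) ^ (m + 1)) =
      (2 * (Real.pi : ℂ) * I / (Nat.factorial (m + 1) : ℂ)) *
        iteratedDeriv (m + 1)
          (fun z : ℂ => ((4 * (m : ℂ) - 2) * z ^ 2 - 2) / (z + I) ^ (m + 1)) I := by
  generalize 4 * (m : ℂ) - 2 = A
  obtain ⟨k, rfl⟩ : ∃ c, m = c + 1 := ⟨m - 1, by omega⟩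
  have key : ∀ z : ℂ, z + I ≠ 0 → (A * z ^ 2 - 2) / (z + I) ^ (k + 1 + 1) =
      A * GG k z + (-2 * I * A) * GG (k + 1) z + (-A - 2) * GG (k + 1 + 1) z := by
    intro z hz
    have g1 : GG (k + 1) z = (z + I) * GG (k + 1 + 1) z := by
      simp only [GG]; field_simp; ring
    have g0 : GG k z = (z + I) ^ 2 * GG (k + 1 + 1) z := by
      simp only [GG]; field_simp; try ring
    rw [g0, g1, div_eq_mul_inv]
    change _ * GG (k + 1 + 1) z = _
    linear_combination (A * GG (k + 1 + 1) z) * I_sq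
  have h1 : ∀ x : ℝ, (A * (x : ℂ) ^ 2 - 2) /
        (((x : ℂ) - I) ^ (k + 1 + 2) * ((x : ℂ) + I) ^ (k + 1 + 1)) =
      A * FF (k + 2 + 1) k x + (-2 * I * A) * FF (k + 2 + 1) (k + 1) x
        + (-A - 2) * FF (k + 2 + 1) (k + 1 + 1) x := by
    intro x
    rw [mul_comm ((_ : ℂ) ^ (k + 1 + 2)), ← div_div, key _ (add_ne x), div_eq_mul_inv]
    simp only [FF, GG, show k + 1 + 2 = k + 2 + 1 by ring]
    ring
  have h2 : (fun z : ℂ => (A * z ^ 2 - 2) / (z + I) ^ (k + 1 + 1)) =ᶠ[nhds I]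
      ((fun z => A * GG k z) + (fun z => (-2 * I * A) * GG (k + 1) z))
        + (fun z => (-A - 2) * GG (k + 1 + 1) z) := by
    have : ∀ᶠ z in nhds I, z + I ≠ 0 := by
      refine ContinuousAt.eventually_ne (by fun_prop) ?_
      rw [← two_mul]; simp
    filter_upwards [this] with z hz using key z hz
  rw [h2.iteratedDeriv_eq]
  have c0 : ContDiffAt ℂ (k + 1 + 1 : ℕ) (fun z => (A) * GG (k) z) I :=
    contDiffAt_const.mul (contDiff_GG _ _)
  have c1 : ContDiffAt ℂ (k + 1 + 1 : ℕ) (fun z => (-2 * I * A) * GG (k + 1) z) I :=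
    contDiffAt_const.mul (contDiff_GG _ _)
  have c2 : ContDiffAt ℂ (k + 1 + 1 : ℕ) (fun z => (-A - 2) * GG (k + 1 + 1) z) I :=
    contDiffAt_const.mul (contDiff_GG _ _)
  have c01 : ContDiffAt ℂ (k + 1 + 1 : ℕ)
      ((fun z => A * GG k z) + (fun z => (-2 * I * A) * GG (k + 1) z)) I := c0.add c1
  rw [iteratedDeriv_add c01 c2, iteratedDeriv_add c0 c1]
  simp only [iteratedDeriv_const_mul_field, h1]
  have i0 := (integrable_FF (k + 2 + 1) k (by omega)).const_mul A
  have i1 := (integrable_FF (k + 2 + 1) (k + 1) (by omega)).const_mul (-2 * I * A)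
  have i2 := (integrable_FF (k + 2 + 1) (k + 1 + 1) (by omega)).const_mul (-A - 2)
  have i01 : Integrable (fun x => A * FF (k + 2 + 1) k x
      + (-2 * I * A) * FF (k + 2 + 1) (k + 1) x) := i0.add i1
  rw [integral_add i01 i2, integral_add i0 i1]
  simp only [integral_const_mul]
  rw [main _ _ (by omega), main _ _ (by omega), main _ _ (by omega)]
  ring
end

section
/- Let N be a natural number with N ≥ 1, let p be a polynomial with complex coefficients of degree at most 2N − 2, and let r be a real number with 0 < r < 1. Then ∮_{z ∈ C(i,r)} p(z)/(1 + z²)^N dz = ∫_ℝ p(x)/(1 + x²)^N dx, the right-hand side being the Bochner integral over ℝ of the complex-valued function x ↦ p(x)/(1+x²)^N (with x coerced to ℂ). -/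
open MeasureTheory Complex

lemma aux_ne_s15 (x : ℝ) : (1 + (x:ℂ)^2) ≠ 0 := by
  have : (0:ℝ) < 1 + x^2 := by positivity
  exact_mod_cast this.ne'

lemma aux_norm_s15 (x : ℝ) : ‖(1 + (x:ℂ)^2)‖ = 1 + x^2 := by
  have h : (1 + (x:ℂ)^2) = ((1 + x^2 : ℝ) : ℂ) := by push_cast; rfl
  rw [h, Complex.norm_real, Real.norm_of_nonneg (by positivity)]

lemma aux_bound (M k : ℕ) (hk : k ≤ 2 * M) (x : ℝ) : |x|^k ≤ (1+x^2)^M := by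
  rcases le_total |x| 1 with h | h
  · calc |x|^k ≤ 1 := pow_le_one₀ (abs_nonneg _) h
      _ ≤ _ := one_le_pow₀ (by nlinarith [sq_nonneg x])
  · calc |x|^k ≤ |x|^(2*M) := pow_le_pow_right₀ h hk
      _ = (x^2)^M := by rw [pow_mul, sq_abs]
      _ ≤ _ := by gcongr; linarith

lemma aux_int_s15 (M : ℕ) (p : Polynomial ℂ) (hp : p.natDegree ≤ 2 * M) :
    Integrable (fun x : ℝ => p.eval (x : ℂ) / (1 + (x : ℂ) ^ 2) ^ (M+1)) := by
  have hi : Integrable (fun x : ℝ => (∑ k ∈ Finset.range (p.natDegree+1), ‖p.coeff k‖) * (1+x^2)⁻¹) :=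
    integrable_inv_one_add_sq.const_mul _
  refine hi.mono' ?_ ?_
  · apply Continuous.aestronglyMeasurable
    refine Continuous.div ?_ (by fun_prop) (fun x => pow_ne_zero _ (aux_ne_s15 x))
    exact p.continuous.comp Complex.continuous_ofReal
  · refine Filter.Eventually.of_forall fun x => ?_
    have hpos : (0:ℝ) < 1 + x^2 := by positivity
    rw [norm_div, norm_pow, aux_norm_s15, div_le_iff₀ (by positivity), pow_succ]
    have : ‖p.eval (x:ℂ)‖ ≤ (∑ k ∈ Finset.range (p.natDegree+1), ‖p.coeff k‖) * (1+x^2)^M := by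
      rw [Polynomial.eval_eq_sum_range, Finset.sum_mul]
      refine (norm_sum_le _ _).trans (Finset.sum_le_sum fun k hk => ?_)
      rw [norm_mul, norm_pow, Complex.norm_real, Real.norm_eq_abs]
      gcongr
      apply aux_bound
      have := Finset.mem_range.1 hk
      omega
    refine this.trans (le_of_eq ?_)
    field_simp
    ring

lemma aux_circ (r : ℝ) (hr0 : 0 < r) (hr1 : r < 1) (z : ℂ) (hz : z ∈ Metric.sphere I r) :
    1 + z^2 ≠ 0 := by
  intro h
  have h2 : (z - I) * (z + I) = 0 := by linear_combination h - I_sq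
  rw [Metric.mem_sphere, dist_eq_norm] at hz
  rcases mul_eq_zero.1 h2 with h3 | h3
  · rw [h3] at hz; simp at hz; linarith
  · have : z - I = -(2 * I) := by linear_combination h3
    rw [this] at hz; simp at hz; linarith

lemma aux_base (c : ℂ) (r : ℝ) (hr0 : 0 < r) (hr1 : r < 1) :
    (∮ z in C(I, r), c / (1 + z ^ 2)) = ∫ x : ℝ, c / (1 + (x : ℂ) ^ 2) := by
  have hR : ∫ x : ℝ, c / (1 + (x : ℂ) ^ 2) = c * Real.pi := by
    rw [← integral_univ_inv_one_add_sq, ← integral_complex_ofReal, ← integral_const_mul]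
    congr 1; ext x; push_cast; rw [div_eq_mul_inv]
  have hd : DiffContOnCl ℂ (fun z : ℂ => c / (z + I)) (Metric.ball I r) := by
    apply DifferentiableOn.diffContOnCl
    rw [closure_ball _ hr0.ne']
    intro z hz
    have : z + I ≠ 0 := by
      intro h
      rw [Metric.mem_closedBall, dist_eq_norm] at hz
      have : z - I = -(2 * I) := by linear_combination h
      rw [this] at hz; simp at hz; linarith
    have hdz : DifferentiableAt ℂ (fun z : ℂ => c / (z + I)) z :=
      DifferentiableAt.fun_div (by fun_prop) (by fun_prop) this
    exact hdz.differentiableWithinAt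
  have := hd.circleIntegral_sub_inv_smul (Metric.mem_ball_self hr0)
  have e : (∮ z in C(I, r), c / (1 + z ^ 2)) = ∮ z in C(I, r), (z - I)⁻¹ • (c / (z + I)) := by
    congr 1; ext z
    have : 1 + z^2 = (z - I) * (z + I) := by linear_combination I_sq
    rw [this, smul_eq_mul, div_eq_mul_inv, mul_inv, div_eq_mul_inv]; ring
  rw [e, this, hR, smul_eq_mul]
  have := I_ne_zero
  field_simp
  ring

lemma aux_main (r : ℝ) (hr0 : 0 < r) (hr1 : r < 1) (M : ℕ) :
    ∀ (p : Polynomial ℂ) (hp : p.natDegree ≤ 2 * M),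
    (∮ z in C(I, r), p.eval z / (1 + z ^ 2) ^ (M+1)) =
      ∫ x : ℝ, p.eval (x : ℂ) / (1 + (x : ℂ) ^ 2) ^ (M+1) := by
  induction M with
  | zero =>
    intro p hp
    rw [Polynomial.eq_C_of_natDegree_le_zero hp]
    simpa using aux_base (p.coeff 0) r hr0 hr1
  | succ M ih =>
    intro p hp
    have hmon : (Polynomial.X^2 + Polynomial.C 1 : Polynomial ℂ).Monic :=
      Polynomial.monic_X_pow_add_C _ (by norm_num)
    have hdeg : (Polynomial.X^2 + Polynomial.C 1 : Polynomial ℂ).natDegree = 2 :=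
      Polynomial.natDegree_X_pow_add_C
    set g : Polynomial ℂ := Polynomial.X^2 + Polynomial.C 1 with hg
    have hrem : (p %ₘ g).natDegree ≤ 1 := by
      have := Polynomial.natDegree_modByMonic_lt p hmon (by intro h; rw [h] at hdeg; simp at hdeg)
      omega
    obtain ⟨β, α, hαβ⟩ := Polynomial.exists_eq_X_add_C_of_natDegree_le_one hrem
    have hpe : ∀ z, p.eval z = (1+z^2) * (p /ₘ g).eval z + (α + β * z) := by
      intro z
      conv_lhs => rw [← Polynomial.modByMonic_add_div p g]
      rw [hαβ]; simp [hg]; ring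
    have hn : (2 * ((M:ℂ) + 1)) ≠ 0 := by
      have : (M:ℂ) + 1 ≠ 0 := by exact_mod_cast Nat.succ_ne_zero M
      exact mul_ne_zero two_ne_zero this
    set b := α / (2 * ((M:ℂ)+1)) with hb
    set a := -β / (2 * ((M:ℂ)+1)) with ha
    have hα : α = 2 * ((M:ℂ)+1) * b := by rw [hb]; field_simp
    have hβ : β = -(2 * ((M:ℂ)+1) * a) := by rw [ha]; field_simp
    set s := p /ₘ g + Polynomial.C (α - b) with hs
    have hsd : s.natDegree ≤ 2 * M := by
      rw [hs, Polynomial.natDegree_add_C, Polynomial.natDegree_divByMonic p hmon, hdeg]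
      omega
    let F : ℂ → ℂ := fun z => (a + b * z) / (1+z^2)^(M+1)
    let F' : ℂ → ℂ := fun z => p.eval z / (1+z^2)^(M+1+1) - s.eval z / (1+z^2)^(M+1)
    have hF : ∀ z : ℂ, 1 + z^2 ≠ 0 → HasDerivAt F (F' z) z := by
      intro z hz
      have h1 : HasDerivAt (fun z : ℂ => a + b * z) (b * 1) z :=
        ((hasDerivAt_id z).const_mul b).const_add a
      have h2 : HasDerivAt (fun z : ℂ => (1+z^2)^(M+1)) (((M+1:ℕ):ℂ) * (1+z^2)^M * (2 * z)) z := by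
        have := (((hasDerivAt_pow 2 z).const_add 1).fun_pow (M+1))
        exact this.congr_deriv (by simp)
      have h3 := h1.div h2 (pow_ne_zero _ hz)
      refine HasDerivAt.congr_deriv (f := F) h3 ?_
      symm
      simp only [F', hs, hpe, Polynomial.eval_add, Polynomial.eval_C]
      rw [hα, hβ]
      push_cast
      field_simp
      ring
    have hcirc : (∮ z in C(I, r), F' z) = 0 :=
      circleIntegral.integral_eq_zero_of_hasDerivWithinAt hr0.le
        fun z hz => (hF z (aux_circ r hr0 hr1 z hz)).hasDerivWithinAt
    have hpi := aux_int_s15 (M+1) p hp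
    have hsi := aux_int_s15 M s hsd
    have hlim : ∀ l : Filter ℝ, Filter.Tendsto (fun x : ℝ => |x|) l Filter.atTop →
        Filter.Tendsto (fun x : ℝ => F x) l (nhds 0) := by
      intro l hl
      have h0 : Filter.Tendsto (fun x : ℝ => (‖a‖+‖b‖) * |x|⁻¹) l (nhds 0) := by
        simpa using (tendsto_inv_atTop_zero.comp hl).const_mul (‖a‖+‖b‖)
      refine squeeze_zero_norm' ?_ h0
      filter_upwards [hl.eventually_ge_atTop 1] with x hx
      have hx0 : 0 < |x| := by linarith
      have hpos : (0:ℝ) < 1 + x^2 := by positivity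
      simp only [F]
      rw [norm_div, norm_pow, aux_norm_s15, ← div_eq_mul_inv, div_le_div_iff₀ (by positivity) hx0]
      have h1 : ‖a + b * x‖ ≤ (‖a‖+‖b‖) * |x| := by
        refine (norm_add_le _ _).trans ?_
        rw [norm_mul, Complex.norm_real, Real.norm_eq_abs]
        nlinarith [norm_nonneg a]
      have h2 := aux_bound (M+1) 2 (by omega) x
      calc _ ≤ (‖a‖+‖b‖) * |x| * |x| := by gcongr
        _ = (‖a‖+‖b‖) * |x|^2 := by ring
        _ ≤ _ := by gcongr
    have hline : ∫ x : ℝ, F' x = 0 := by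
      have := integral_of_hasDerivAt_of_tendsto (f := fun x : ℝ => F x) (f' := fun x : ℝ => F' x)
        (fun x => (hF x (aux_ne_s15 x)).comp_ofReal) (hpi.sub hsi)
        (hlim _ Filter.tendsto_abs_atBot_atTop) (hlim _ Filter.tendsto_abs_atTop_atTop)
      simpa using this
    have hci : ∀ (q : Polynomial ℂ) (k : ℕ),
        CircleIntegrable (fun z => q.eval z / (1+z^2)^k) I r := by
      intro q k
      apply ContinuousOn.circleIntegrable hr0.le
      exact ContinuousOn.div q.continuous.continuousOn (by fun_prop)
        fun z hz => pow_ne_zero _ (aux_circ r hr0 hr1 z hz)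
    simp only [F'] at hcirc hline
    rw [circleIntegral.integral_sub (hci _ _) (hci _ _)] at hcirc
    rw [integral_sub hpi hsi] at hline
    rw [sub_eq_zero.1 hcirc, sub_eq_zero.1 hline]
    exact ih s hsd

theorem stmt15 (N : ℕ) (hN : 1 ≤ N) (p : Polynomial ℂ) (hp : p.natDegree ≤ 2 * N - 2)
    (r : ℝ) (hr0 : 0 < r) (hr1 : r < 1) :
    (∮ z in C(I, r), p.eval z / (1 + z ^ 2) ^ N) =
      ∫ x : ℝ, p.eval (x : ℂ) / (1 + (x : ℂ) ^ 2) ^ N := by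
  obtain ⟨M, rfl⟩ : ∃ M, N = M + 1 := ⟨N - 1, by omega⟩
  exact aux_main r hr0 hr1 M p (by omega)
end
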